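/- Let n ≥ 1 and r ≥ 1 be integers and let x, y ∈ [0,∞)^n. Suppose F_{k,r}(x) ≤ F_{k,r}(y) for every integer k with r ≤ k ≤ n·r, and suppose ∑_{i=1}^n x_i = ∑_{i=1}^n y_i. Then for every real p with 1 ≤ p ≤ r+1 one has ∑_{i=1}^n x_i^p ≥ ∑_{i=1}^n y_i^p. -/

import Mathlib

open Finset MeasureTheory

/-- `F n r k x`: the sum over all n-tuples κ of nonnegative integers with `∑ i, κ i = k`
and `max_i κ i ≤ r` of `∏ i, x i ^ κ i / (κ i)!`. -/
noncomputable def F (n r k : ℕ) (x : Fin n → ℝ) : ℝ :=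
  ∑ κ ∈ Finset.univ.filter (fun κ : Fin n → Fin (r + 1) => ∑ i, (κ i : ℕ) = k),
    ∏ i, x i ^ (κ i : ℕ) / (Nat.factorial (κ i : ℕ))

/-!
The polynomial `P(s) = ∑_{j ≤ r} s ^ j / j!` satisfies `∏ i, P(x i * t) = ∑ k, F n r k x * t ^ k`.
For `k ≤ r` the coefficient is `(∑ i, x i) ^ k / k!`, so the hypotheses compare all coefficients
and give `∏ i, P(x i * t) ≤ ∏ i, P(y i * t)` for `t > 0`. Put `g(s) = s - log P(s)`. Taking
logarithms, `∑ i, g(y i * t) ≤ ∑ i, g(x i * t)`. Since `g` is positive, `O(s)` at infinity and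
`O(s ^ (r + 1))` at `0`, the integral `C = ∫ t ^ (-p - 1) * g(t)` over `t > 0` is positive and
finite for `1 < p < r + 1`, and `∫ t ^ (-p - 1) * g(a * t) = C * a ^ p`. Integrating the inequality
against `t ^ (-p - 1)` proves the theorem for these `p`; `p = 1` is the hypothesis on the sums, and
`p = r + 1` follows by continuity.
-/

open Filter Topology Asymptotics

section Scaling

variable {E : Type*} [NormedAddCommGroup E] [NormedSpace ℝ E] {a : ℝ}

lemma eqOn_rpow_smul_comp_mul_left (g : ℝ → E) (s : ℝ) (ha : 0 < a) :
    Set.EqOn (fun t ↦ t ^ (s - 1) • g (a * t)) (fun t ↦ a ^ (1 - s) • (a * t) ^ (s - 1) • g (a * t))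
      (Set.Ioi 0) := by
  intro t ht
  dsimp only
  rw [Real.mul_rpow ha.le (le_of_lt ht), smul_smul, ← mul_assoc, ← Real.rpow_add ha,
    sub_add_sub_cancel, sub_self, Real.rpow_zero, one_mul]

lemma integrableOn_rpow_smul_comp_mul_left {g : ℝ → E} {s : ℝ} (ha : 0 < a)
    (hg : IntegrableOn (fun t ↦ t ^ (s - 1) • g t) (Set.Ioi 0)) :
    IntegrableOn (fun t ↦ t ^ (s - 1) • g (a * t)) (Set.Ioi 0) := by
  rw [integrableOn_congr_fun (eqOn_rpow_smul_comp_mul_left g s ha) measurableSet_Ioi]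
  refine Integrable.smul (a ^ (1 - s)) ?_
  exact (integrableOn_Ioi_comp_mul_left_iff (fun t ↦ t ^ (s - 1) • g t) 0 ha).2
    (by rwa [mul_zero])

lemma integral_rpow_smul_comp_mul_left (g : ℝ → E) (s : ℝ) (ha : 0 < a) :
    ∫ t in Set.Ioi 0, t ^ (s - 1) • g (a * t) = a ^ (-s) • ∫ t in Set.Ioi 0, t ^ (s - 1) • g t := by
  rw [setIntegral_congr_fun measurableSet_Ioi (eqOn_rpow_smul_comp_mul_left g s ha),
    integral_smul, integral_comp_mul_left_Ioi (fun t ↦ t ^ (s - 1) • g t) 0 ha, mul_zero,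
    smul_smul, ← Real.rpow_neg_one a, ← Real.rpow_add ha]
  ring_nf

end Scaling

section Comparison

variable {ι : Type*} {s : Finset ι} {x y : ι → ℝ} {g : ℝ → ℝ} {p q a : ℝ}

lemma integral_rpow_mul_pos (hpos : ∀ t, 0 < t → 0 < g t)
    (hint : IntegrableOn (fun t ↦ t ^ q * g t) (Set.Ioi 0)) :
    0 < ∫ t in Set.Ioi 0, t ^ q * g t := by
  have integrand_pos : ∀ t ∈ Set.Ioi (0 : ℝ), 0 < t ^ q * g t := fun t ht ↦
    mul_pos (Real.rpow_pos_of_pos ht q) (hpos t ht)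
  rw [setIntegral_pos_iff_support_of_nonneg_ae
    ((ae_restrict_mem measurableSet_Ioi).mono fun t ht ↦ (integrand_pos t ht).le) hint,
    Set.inter_eq_right.2 fun t ht ↦ Function.mem_support.2 (integrand_pos t ht).ne']
  simp

lemma integrableOn_rpow_mul_comp_mul_left (hg : g 0 = 0)
    (hint : IntegrableOn (fun t ↦ t ^ (q - 1) * g t) (Set.Ioi 0)) (ha : 0 ≤ a) :
    IntegrableOn (fun t ↦ t ^ (q - 1) * g (a * t)) (Set.Ioi 0) := by
  rcases ha.eq_or_lt with rfl | ha
  · simp [hg]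
  · exact integrableOn_rpow_smul_comp_mul_left ha hint

lemma integral_rpow_mul_comp_mul_left (hg : g 0 = 0) (hp : p ≠ 0) (ha : 0 ≤ a) :
    ∫ t in Set.Ioi 0, t ^ (-p - 1) * g (a * t) = a ^ p * ∫ t in Set.Ioi 0, t ^ (-p - 1) * g t := by
  rcases ha.eq_or_lt with rfl | ha
  · simp [hg, Real.zero_rpow hp]
  · simpa using integral_rpow_smul_comp_mul_left g (-p) ha

theorem sum_rpow_le_sum_rpow_of_sum_comp_mul_le (hg : g 0 = 0) (hpos : ∀ t, 0 < t → 0 < g t)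
    (hp : p ≠ 0) (hint : IntegrableOn (fun t ↦ t ^ (-p - 1) * g t) (Set.Ioi 0))
    (hx : ∀ i ∈ s, 0 ≤ x i) (hy : ∀ i ∈ s, 0 ≤ y i)
    (h : ∀ t, 0 < t → ∑ i ∈ s, g (y i * t) ≤ ∑ i ∈ s, g (x i * t)) :
    ∑ i ∈ s, y i ^ p ≤ ∑ i ∈ s, x i ^ p := by
  have integrable_term {z : ι → ℝ} (hz : ∀ i ∈ s, 0 ≤ z i) (i : ι) (hi : i ∈ s) :
      IntegrableOn (fun t ↦ t ^ (-p - 1) * g (z i * t)) (Set.Ioi 0) :=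
    integrableOn_rpow_mul_comp_mul_left hg hint (hz i hi)
  have sum_rpow_mul {z : ι → ℝ} (hz : ∀ i ∈ s, 0 ≤ z i) :
      (∑ i ∈ s, z i ^ p) * ∫ t in Set.Ioi 0, t ^ (-p - 1) * g t =
        ∫ t in Set.Ioi 0, ∑ i ∈ s, t ^ (-p - 1) * g (z i * t) := by
    rw [integral_finsetSum s (integrable_term hz), Finset.sum_mul]
    exact Finset.sum_congr rfl fun i hi ↦ (integral_rpow_mul_comp_mul_left hg hp (hz i hi)).symm
  refine le_of_mul_le_mul_right ?_ (integral_rpow_mul_pos hpos hint)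
  rw [sum_rpow_mul hx, sum_rpow_mul hy]
  refine setIntegral_mono_on (integrable_finsetSum s (integrable_term hy))
    (integrable_finsetSum s (integrable_term hx)) measurableSet_Ioi fun t ht ↦ ?_
  rw [← Finset.mul_sum, ← Finset.mul_sum]
  exact mul_le_mul_of_nonneg_left (h t ht) (Real.rpow_nonneg (le_of_lt ht) _)

end Comparison

section TruncExp

/-- The truncated exponential: the Taylor polynomial of degree `r` of `Real.exp` at `0`. Products of
its dilates are the generating functions of `F`. -/
noncomputable def truncExp (r : ℕ) (t : ℝ) : ℝ :=
  ∑ j ∈ Finset.range (r + 1), t ^ j / (Nat.factorial j : ℝ)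

/-- The logarithmic gap `t - log (truncExp r t)` between the exponential and its truncation, used as
the kernel that is integrated against `t ^ (-p - 1)`. -/
noncomputable def logTruncExpGap (r : ℕ) (t : ℝ) : ℝ :=
  t - Real.log (truncExp r t)

variable (r : ℕ) {t : ℝ}

@[simp]
lemma truncExp_zero : truncExp r 0 = 1 := by
  simp [truncExp, Finset.sum_range_succ']

lemma continuous_truncExp : Continuous (truncExp r) := by
  unfold truncExp
  fun_prop

lemma one_le_truncExp (ht : 0 ≤ t) : 1 ≤ truncExp r t := by
  simpa [truncExp] using Finset.single_le_sum (f := fun j ↦ t ^ j / (Nat.factorial j : ℝ))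
    (fun _ _ ↦ by positivity) (Finset.mem_range.2 r.succ_pos)

lemma truncExp_pos (ht : 0 ≤ t) : 0 < truncExp r t :=
  one_pos.trans_le (one_le_truncExp r ht)

lemma truncExp_lt_exp (ht : 0 < t) : truncExp r t < Real.exp t :=
  calc truncExp r t < truncExp (r + 1) t := by
        rw [truncExp, truncExp, Finset.sum_range_succ _ (r + 1)]
        exact lt_add_of_pos_right _ (by positivity)
    _ ≤ Real.exp t := Real.sum_le_exp_of_nonneg ht.le (r + 1 + 1)

@[simp]
lemma logTruncExpGap_zero : logTruncExpGap r 0 = 0 := by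
  simp [logTruncExpGap]

lemma logTruncExpGap_pos (ht : 0 < t) : 0 < logTruncExpGap r t :=
  sub_pos.2 <| (Real.log_lt_iff_lt_exp (truncExp_pos r ht.le)).2 (truncExp_lt_exp r ht)

lemma logTruncExpGap_le_self (ht : 0 ≤ t) : logTruncExpGap r t ≤ t :=
  sub_le_self t (Real.log_nonneg (one_le_truncExp r ht))

lemma logTruncExpGap_le_exp_sub_truncExp (ht : 0 < t) :
    logTruncExpGap r t ≤ Real.exp t - truncExp r t := by
  have trunc_pos := truncExp_pos r ht.le
  calc logTruncExpGap r t = Real.log (Real.exp t / truncExp r t) := by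
        rw [Real.log_div (Real.exp_ne_zero t) trunc_pos.ne', Real.log_exp, logTruncExpGap]
    _ ≤ Real.exp t / truncExp r t - 1 := Real.log_le_sub_one_of_pos (by positivity)
    _ = (Real.exp t - truncExp r t) / truncExp r t := by field_simp
    _ ≤ Real.exp t - truncExp r t :=
        div_le_self (sub_nonneg.2 (truncExp_lt_exp r ht).le) (one_le_truncExp r ht.le)

lemma continuousOn_logTruncExpGap : ContinuousOn (logTruncExpGap r) (Set.Ici 0) :=
  continuousOn_id.sub <|
    (continuous_truncExp r).continuousOn.log fun _ ht ↦ (truncExp_pos r ht).ne'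

lemma logTruncExpGap_isBigO_atTop : logTruncExpGap r =O[atTop] fun t ↦ t := by
  refine IsBigO.of_norm_eventuallyLE ?_
  filter_upwards [eventually_gt_atTop 0] with t ht
  rw [Real.norm_of_nonneg (logTruncExpGap_pos r ht).le]
  exact logTruncExpGap_le_self r ht.le

lemma logTruncExpGap_isBigO_nhdsGT_zero :
    logTruncExpGap r =O[𝓝[>] 0] fun t ↦ t ^ (r + 1) := by
  refine IsBigO.trans (IsBigO.of_norm_eventuallyLE ?_)
    ((Real.exp_sub_sum_range_isBigO_pow (r + 1)).mono nhdsWithin_le_nhds)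
  filter_upwards [self_mem_nhdsWithin] with t ht
  rw [Real.norm_of_nonneg (logTruncExpGap_pos r ht).le]
  exact logTruncExpGap_le_exp_sub_truncExp r ht

lemma integrableOn_rpow_mul_logTruncExpGap {p : ℝ} (hp : 1 < p) (hpr : p < r + 1) :
    IntegrableOn (fun t ↦ t ^ (-p - 1) * logTruncExpGap r t) (Set.Ioi 0) := by
  refine mellin_convergent_of_isBigO_scalar (a := -1) (b := -(r + 1))
    (((continuousOn_logTruncExpGap r).mono Set.Ioi_subset_Ici_self).locallyIntegrableOn
      measurableSet_Ioi)
    ?_ (neg_lt_neg hp) ?_ (neg_lt_neg hpr)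
  · simpa using logTruncExpGap_isBigO_atTop r
  · simpa only [neg_neg, ← Nat.cast_add_one, Real.rpow_natCast] using
      logTruncExpGap_isBigO_nhdsGT_zero r

end TruncExp

section PowerSums

variable {ι : Type*} {s : Finset ι} {x y z : ι → ℝ} {r : ℕ} {t : ℝ}

lemma sum_logTruncExpGap (hz : ∀ i ∈ s, 0 ≤ z i) (ht : 0 ≤ t) :
    ∑ i ∈ s, logTruncExpGap r (z i * t) =
      (∑ i ∈ s, z i) * t - Real.log (∏ i ∈ s, truncExp r (z i * t)) := by
  rw [Real.log_prod fun i hi ↦ (truncExp_pos r (mul_nonneg (hz i hi) ht)).ne', Finset.sum_mul,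
    ← Finset.sum_sub_distrib]
  rfl

lemma sum_logTruncExpGap_le_sum_logTruncExpGap
    (hx : ∀ i ∈ s, 0 ≤ x i) (hy : ∀ i ∈ s, 0 ≤ y i)
    (hsum : ∑ i ∈ s, y i ≤ ∑ i ∈ s, x i) (ht : 0 ≤ t)
    (hprod : ∏ i ∈ s, truncExp r (x i * t) ≤ ∏ i ∈ s, truncExp r (y i * t)) :
    ∑ i ∈ s, logTruncExpGap r (y i * t) ≤ ∑ i ∈ s, logTruncExpGap r (x i * t) := by
  rw [sum_logTruncExpGap hx ht, sum_logTruncExpGap hy ht]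
  have prod_pos : 0 < ∏ i ∈ s, truncExp r (x i * t) :=
    Finset.prod_pos fun i hi ↦ truncExp_pos r (mul_nonneg (hx i hi) ht)
  gcongr

theorem sum_rpow_le_sum_rpow_of_prod_truncExp_le
    (hx : ∀ i ∈ s, 0 ≤ x i) (hy : ∀ i ∈ s, 0 ≤ y i) (hsum : ∑ i ∈ s, y i ≤ ∑ i ∈ s, x i)
    (hprod : ∀ t, 0 < t → ∏ i ∈ s, truncExp r (x i * t) ≤ ∏ i ∈ s, truncExp r (y i * t))
    {p : ℝ} (hp : 1 ≤ p) (hpr : p ≤ r + 1) :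
    ∑ i ∈ s, y i ^ p ≤ ∑ i ∈ s, x i ^ p := by
  rcases hp.eq_or_lt with rfl | one_lt_p
  · simpa using hsum
  have le_on_interior : ∀ q ∈ Set.Ioo (1 : ℝ) (r + 1), ∑ i ∈ s, y i ^ q ≤ ∑ i ∈ s, x i ^ q :=
    fun q ⟨one_lt_q, q_lt⟩ ↦ sum_rpow_le_sum_rpow_of_sum_comp_mul_le (logTruncExpGap_zero r)
      (fun _ ↦ logTruncExpGap_pos r) (by positivity)
      (integrableOn_rpow_mul_logTruncExpGap r one_lt_q q_lt) hx hy
      fun t ht ↦ sum_logTruncExpGap_le_sum_logTruncExpGap hx hy hsum ht.le (hprod t ht)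
  have closure_eq : closure (Set.Ioo (1 : ℝ) (r + 1)) = Set.Icc (1 : ℝ) (r + 1) :=
    closure_Ioo (one_lt_p.trans_le hpr).ne
  have continuousOn_powerSum (z : ι → ℝ) :
      ContinuousOn (fun q : ℝ ↦ ∑ i ∈ s, z i ^ q) (closure (Set.Ioo 1 (r + 1))) := by
    rw [closure_eq]
    exact continuousOn_finsetSum s fun i _ q hq ↦
      (Real.continuousAt_const_rpow' (one_pos.trans_le hq.1).ne').continuousWithinAt
  exact le_on_closure le_on_interior (continuousOn_powerSum y) (continuousOn_powerSum x)
    (closure_eq ▸ ⟨hp, hpr⟩)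

end PowerSums

section GeneratingFunction

lemma sum_pow_div_factorial {ι K : Type*} [DecidableEq ι] [Field K] [CharZero K]
    (s : Finset ι) (f : ι → K) (n : ℕ) :
    (∑ i ∈ s, f i) ^ n / (Nat.factorial n : K) =
      ∑ k ∈ s.piAntidiag n, ∏ i ∈ s, f i ^ k i / (Nat.factorial (k i) : K) := by
  rw [Finset.sum_pow_eq_sum_piAntidiag, Finset.sum_div]
  refine Finset.sum_congr rfl fun k hk ↦ ?_
  have factorial_eq : (∏ i ∈ s, (Nat.factorial (k i) : K)) * Nat.multinomial s k =
      Nat.factorial n := by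
    rw [← (Finset.mem_piAntidiag.1 hk).1]
    exact_mod_cast Nat.multinomial_spec s k
  have prod_factorial_ne_zero : ∏ i ∈ s, (Nat.factorial (k i) : K) ≠ 0 :=
    Finset.prod_ne_zero_iff.2 fun i _ ↦ Nat.cast_ne_zero.2 (Nat.factorial_ne_zero _)
  rw [Finset.prod_div_distrib, div_eq_div_iff (Nat.cast_ne_zero.2 n.factorial_ne_zero)
    prod_factorial_ne_zero, ← factorial_eq]
  ring

variable {n r k : ℕ}

lemma F_eq_sum_pow_div_factorial (hk : k ≤ r) (x : Fin n → ℝ) :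
    F n r k x = (∑ i, x i) ^ k / (Nat.factorial k : ℝ) := by
  rw [sum_pow_div_factorial, F]
  refine Finset.sum_bij (fun κ _ i ↦ (κ i : ℕ)) (fun κ hκ ↦ by simpa using hκ)
    (fun κ _ κ' _ h ↦ funext fun i ↦ Fin.ext (congrFun h i)) (fun f hf ↦ ?_) fun _ _ ↦ rfl
  have sum_eq : ∑ i, f i = k := by simpa using hf
  have f_lt (i : Fin n) : f i < r + 1 := by
    have := Finset.single_le_sum_of_canonicallyOrdered (f := f) (Finset.mem_univ i)
    lia
  exact ⟨fun i ↦ ⟨f i, f_lt i⟩, by simpa using sum_eq, rfl⟩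

lemma prod_truncExp_eq_sum_F (n r : ℕ) (x : Fin n → ℝ) (t : ℝ) :
    ∏ i, truncExp r (x i * t) = ∑ k ∈ Finset.range (n * r + 1), F n r k x * t ^ k := by
  have sum_mem_range (κ : Fin n → Fin (r + 1)) : ∑ i, (κ i : ℕ) ∈ Finset.range (n * r + 1) := by
    have := Finset.sum_le_card_nsmul Finset.univ (fun i ↦ (κ i : ℕ)) r fun i _ ↦ (κ i).is_le
    simpa [Nat.lt_succ_iff] using this
  simp_rw [truncExp, ← Fin.sum_univ_eq_sum_range (fun j ↦ (_ * t) ^ j / (Nat.factorial j : ℝ))]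
  rw [Fintype.prod_sum, ← Finset.sum_fiberwise_of_maps_to fun κ _ ↦ sum_mem_range κ]
  refine Finset.sum_congr rfl fun k _ ↦ ?_
  rw [F, Finset.sum_mul]
  refine Finset.sum_congr rfl fun κ hκ ↦ ?_
  rw [← (Finset.mem_filter.1 hκ).2, ← Finset.prod_pow_eq_pow_sum, ← Finset.prod_mul_distrib]
  exact Finset.prod_congr rfl fun i _ ↦ by rw [mul_pow, mul_div_right_comm]

end GeneratingFunction

theorem stmt2 (n r : ℕ) (hn : 1 ≤ n) (hr : 1 ≤ r) (x y : Fin n → ℝ)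
    (hx : ∀ i, 0 ≤ x i) (hy : ∀ i, 0 ≤ y i)
    (hF : ∀ k : ℕ, r ≤ k → k ≤ n * r → F n r k x ≤ F n r k y)
    (hsum : ∑ i, x i = ∑ i, y i) :
    ∀ p : ℝ, 1 ≤ p → p ≤ r + 1 → ∑ i, y i ^ p ≤ ∑ i, x i ^ p := by
  have F_le : ∀ k ≤ n * r, F n r k x ≤ F n r k y := fun k hk ↦ by
    rcases le_total r k with hrk | hkr
    · exact hF k hrk hk
    · rw [F_eq_sum_pow_div_factorial hkr, F_eq_sum_pow_div_factorial hkr, hsum]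
  have prod_le : ∀ t : ℝ, 0 < t → ∏ i, truncExp r (x i * t) ≤ ∏ i, truncExp r (y i * t) := by
    intro t ht
    rw [prod_truncExp_eq_sum_F, prod_truncExp_eq_sum_F]
    gcongr with k hk
    exact F_le k (Finset.mem_range_succ_iff.1 hk)
  exact fun p hp hpr ↦ sum_rpow_le_sum_rpow_of_prod_truncExp_le
    (fun i _ ↦ hx i) (fun i _ ↦ hy i) hsum.ge prod_le hp hpr
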